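/- arXiv:1409.5327 — 2 statements merged into one kernel-verified Lean document; each statement's English description precedes it below -/
import Mathlib

section
/- Proposition (Store-Forward converges to proportional fairness): let Q ∈ ℕ^J with Q_j ≥ 1 for every j. The function s ↦ ∑_{j ∈ J} Q_j log s_j attains its maximum over P ∩ (0, ∞)^J at a unique point σ^PF(Q), and for every j ∈ J, the Store-Forward allocation converges to it: lim_{c → ∞, c ∈ ℕ} Φ(cQ − e_j) / Φ(cQ) = σ^PF_j(Q), where e_j is the j-th unit vector of ℕ^J. -/
open scoped BigOperators Classical

/-- The Store-Forward normalizing constant `Φ(Q)`. -/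
noncomputable def Phi {J L : Type*} [Fintype J] [Fintype L]
    (A : L → J → ℝ) (Q : J → ℕ) : ℝ :=
  ∑' m : L → J → ℕ,
    if (∀ l j, A l j = 0 → m l j = 0) ∧ (∀ j, ∑ l, m l j = Q j) then
      ∏ l, (((∑ j, m l j).factorial : ℝ) / ∏ j, ((m l j).factorial : ℝ)) *
        ∏ j, A l j ^ m l j
    else 0

/-!
A maximizer `σ` of `∏ j, s j ^ q j` over the polytope `P` satisfies the first-order condition
`∑ j, q j * (s j / σ j) ≤ ∑ j, q j` for `s ∈ P`. Conversely, since `log x ≤ x - 1`, this condition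
makes `σ` the unique maximizer of `∑ j, q j * log (s j)`.

Inserting one job into an array of job counts relates `Φ` at neighbouring `N`. With `e j` the unit
vectors, `|N| = ∑ j, N j` and `|L|` the number of pools:
* the ratios `Φ(N - e j) / Φ(N)` form a point of `P`;
* `∑ j, (N j + 1) * Φ(N + e j) * s j ≤ (|N| + |L|) * Φ(N)` for `s ∈ P`;
* `N j * Φ(N) ^ 2 ≤ (N j + 1) * Φ(N + e j) * Φ(N - e j)`, by Cauchy–Schwarz.

Let `σ` be proportionally fair for the weights `N`, and put `a j = Φ(N - e j) / (Φ(N) * σ j)` and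
`b j = (N j + 1) * Φ(N + e j) * σ j / (N j * Φ(N))`. Then `a j * b j ≥ 1`, although the `N`-weighted
means of `a` and `b` are at most `1` and `1 + |L| / |N|`. This forces
`(N j * (a j - 1)) ^ 2 ≤ |N| * |L|`, and for `N = c Q` it gives `(a j - 1) ^ 2 = O(1 / c)`.
-/

open Filter Topology

namespace StoreForward

variable {J L : Type*}

section Polytope

variable [Fintype J]

/-- The scheduling polytope `P` of the resource constraints `A`. -/
def schedulingPolytope (A : L → J → ℝ) : Set (J → ℝ) :=
  {s | (∀ j, 0 ≤ s j) ∧ ∀ l, ∑ j, A l j * s j ≤ 1}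

theorem convex_schedulingPolytope (A : L → J → ℝ) : Convex ℝ (schedulingPolytope A) := by
  rintro s ⟨hs₀, hs⟩ t ⟨ht₀, ht⟩ a b ha hb hab
  refine ⟨fun j ↦ add_nonneg (mul_nonneg ha (hs₀ j)) (mul_nonneg hb (ht₀ j)), fun l ↦ ?_⟩
  calc ∑ j, A l j * (a • s + b • t) j
      = a * ∑ j, A l j * s j + b * ∑ j, A l j * t j := by
        rw [Finset.mul_sum, Finset.mul_sum, ← Finset.sum_add_distrib]
        refine Finset.sum_congr rfl fun j _ ↦ ?_
        simp only [Pi.add_apply, Pi.smul_apply, smul_eq_mul]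
        ring
    _ ≤ a * 1 + b * 1 := by gcongr; exacts [hs l, ht l]
    _ = 1 := by rw [mul_one, mul_one, hab]

theorem isClosed_schedulingPolytope (A : L → J → ℝ) : IsClosed (schedulingPolytope A) := by
  simp only [schedulingPolytope, Set.ofPred_and, Set.ofPred_forall]
  exact (isClosed_iInter fun j ↦ isClosed_le continuous_const (continuous_apply j)).inter
    (isClosed_iInter fun l ↦ isClosed_le (by fun_prop) continuous_const)

theorem isCompact_schedulingPolytope {A : L → J → ℝ} (hA : ∀ l j, 0 ≤ A l j)
    (hcol : ∀ j, ∃ l, 0 < A l j) : IsCompact (schedulingPolytope A) := by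
  choose pool hpool using hcol
  refine (isCompact_Icc (a := 0) (b := fun j ↦ 1 / A (pool j) j)).of_isClosed_subset
    (isClosed_schedulingPolytope A) fun s ⟨hs₀, hs⟩ ↦ ⟨hs₀, fun j ↦ ?_⟩
  rw [le_div_iff₀' (hpool j)]
  exact (Finset.single_le_sum (f := fun i ↦ A (pool j) i * s i)
    (fun i _ ↦ mul_nonneg (hA _ i) (hs₀ i)) (Finset.mem_univ j)).trans (hs (pool j))

theorem exists_pos_mem_schedulingPolytope [Finite L] (A : L → J → ℝ) :
    ∃ s ∈ schedulingPolytope A, ∀ j, 0 < s j := by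
  have small (l : L) : ∀ᶠ ε : ℝ in 𝓝[>] 0, ∑ j, A l j * ε < 1 := by
    have hcont : Continuous fun ε : ℝ ↦ ∑ j, A l j * ε := by fun_prop
    exact nhdsWithin_le_nhds (hcont.continuousAt.eventually_lt continuousAt_const (by simp))
  obtain ⟨ε, hε, hε₀⟩ := ((eventually_all.2 small).and self_mem_nhdsWithin).exists
  exact ⟨fun _ ↦ ε, ⟨fun _ ↦ hε₀.le, fun l ↦ (hε l).le⟩, fun _ ↦ hε₀⟩

end Polytope

section ProportionalFairness

variable [Fintype J]

/-- Kelly's criterion for `σ` to be the proportionally fair allocation with weights `q`: moving from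
`σ` to another feasible allocation never increases the weighted sum of relative changes. -/
structure IsProportionallyFair (A : L → J → ℝ) (q σ : J → ℝ) : Prop where
  mem : σ ∈ schedulingPolytope A
  pos : ∀ j, 0 < σ j
  sum_mul_div_le : ∀ s ∈ schedulingPolytope A, ∑ j, q j * (s j / σ j) ≤ ∑ j, q j

theorem sum_mul_div_le_of_isMaxOn_prod_rpow {S : Set (J → ℝ)} (hS : Convex ℝ S) {q σ s : J → ℝ}
    (hσS : σ ∈ S) (hσ : ∀ j, 0 < σ j) (hmax : IsMaxOn (fun s ↦ ∏ j, s j ^ q j) S σ)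
    (hs : s ∈ S) : ∑ j, q j * (s j / σ j) ≤ ∑ j, q j := by
  have log_prod {t : J → ℝ} (ht : ∀ j, 0 < t j) :
      Real.log (∏ j, t j ^ q j) = ∑ j, q j * Real.log (t j) := by
    rw [Real.log_prod fun j _ ↦ (Real.rpow_pos_of_pos (ht j) _).ne']
    exact Finset.sum_congr rfl fun j _ ↦ Real.log_rpow (ht j) _
  have hlocal : IsLocalMaxOn (fun t ↦ ∑ j, q j * Real.log (t j)) S σ := by
    have hpos : ∀ᶠ t in 𝓝[S] σ, ∀ j, 0 < t j := eventually_all.2 fun j ↦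
      nhdsWithin_le_nhds ((continuous_apply j).continuousAt.eventually_const_lt (hσ j))
    filter_upwards [hpos, self_mem_nhdsWithin] with t ht htS
    rw [← log_prod ht, ← log_prod hσ]
    exact Real.log_le_log (Finset.prod_pos fun j _ ↦ Real.rpow_pos_of_pos (ht j) _) (hmax htS)
  have hderiv := HasFDerivAt.fun_sum (u := Finset.univ) fun j _ ↦
    ((hasFDerivAt_apply (𝕜 := ℝ) j σ).log (hσ j).ne').const_mul (q j)
  have hle := hlocal.hasFDerivWithinAt_nonpos hderiv.hasFDerivWithinAt
    (sub_mem_posTangentConeAt_of_segment_subset (hS.segment_subset hσS hs))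
  rw [← sub_nonpos, ← Finset.sum_sub_distrib]
  convert hle using 1
  simp only [sum_apply, smul_apply, ContinuousLinearMap.proj_apply, Pi.sub_apply, smul_eq_mul]
  refine Finset.sum_congr rfl fun j _ ↦ ?_
  have := (hσ j).ne'
  field_simp

theorem exists_isProportionallyFair [Finite L] {A : L → J → ℝ} (hA : ∀ l j, 0 ≤ A l j)
    (hcol : ∀ j, ∃ l, 0 < A l j) {q : J → ℝ} (hq : ∀ j, 0 < q j) :
    ∃ σ, IsProportionallyFair A q σ := by
  obtain ⟨t, ht, ht₀⟩ := exists_pos_mem_schedulingPolytope A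
  -- Unlike the sum of logarithms, the product is continuous on the whole polytope; it vanishes
  -- where some coordinate does.
  have hcont : Continuous fun s : J → ℝ ↦ ∏ j, s j ^ q j :=
    continuous_finsetProd _ fun j _ ↦
      (continuous_apply j).rpow_const fun _ ↦ Or.inr (hq j).le
  obtain ⟨σ, hσ, hmax⟩ :=
    (isCompact_schedulingPolytope hA hcol).exists_isMaxOn ⟨t, ht⟩ hcont.continuousOn
  have hprod : 0 < ∏ j, σ j ^ q j :=
    (Finset.prod_pos fun j _ ↦ Real.rpow_pos_of_pos (ht₀ j) _).trans_le (hmax ht)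
  have hσ₀ (j : J) : 0 < σ j := by
    refine (hσ.1 j).lt_of_ne' fun h ↦ hprod.ne' (Finset.prod_eq_zero (Finset.mem_univ j) ?_)
    rw [h, Real.zero_rpow (hq j).ne']
  exact ⟨σ, hσ, hσ₀, fun s hs ↦
    sum_mul_div_le_of_isMaxOn_prod_rpow (convex_schedulingPolytope A) hσ hσ₀ hmax hs⟩

namespace IsProportionallyFair

variable {A : L → J → ℝ} {q σ s : J → ℝ}

theorem const_mul (h : IsProportionallyFair A q σ) {c : ℝ} (hc : 0 ≤ c) :
    IsProportionallyFair A (fun j ↦ c * q j) σ where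
  mem := h.mem
  pos := h.pos
  sum_mul_div_le s hs := by
    simp only [mul_assoc, ← Finset.mul_sum]
    exact mul_le_mul_of_nonneg_left (h.sum_mul_div_le s hs) hc

theorem sum_mul_log_add_le (h : IsProportionallyFair A q σ) (hs : s ∈ schedulingPolytope A)
    (hs₀ : ∀ j, 0 < s j) :
    ∑ j, q j * Real.log (s j) + ∑ j, q j * (s j / σ j - 1 - Real.log (s j / σ j)) ≤
      ∑ j, q j * Real.log (σ j) := by
  have hterm (j : J) : q j * Real.log (s j) + q j * (s j / σ j - 1 - Real.log (s j / σ j)) =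
      q j * Real.log (σ j) + (q j * (s j / σ j) - q j) := by
    rw [Real.log_div (hs₀ j).ne' (h.pos j).ne']
    ring
  rw [← Finset.sum_add_distrib, Finset.sum_congr rfl fun j _ ↦ hterm j, Finset.sum_add_distrib,
    Finset.sum_sub_distrib]
  linarith [h.sum_mul_div_le s hs]

theorem sum_mul_log_le (h : IsProportionallyFair A q σ) (hq : ∀ j, 0 ≤ q j)
    (hs : s ∈ schedulingPolytope A) (hs₀ : ∀ j, 0 < s j) :
    ∑ j, q j * Real.log (s j) ≤ ∑ j, q j * Real.log (σ j) := by
  have hgap : 0 ≤ ∑ j, q j * (s j / σ j - 1 - Real.log (s j / σ j)) :=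
    Finset.sum_nonneg fun j _ ↦ mul_nonneg (hq j) <|
      sub_nonneg.2 (Real.log_le_sub_one_of_pos (div_pos (hs₀ j) (h.pos j)))
  linarith [h.sum_mul_log_add_le hs hs₀]

theorem eq_of_sum_mul_log_le (h : IsProportionallyFair A q σ) (hq : ∀ j, 0 < q j)
    (hs : s ∈ schedulingPolytope A) (hs₀ : ∀ j, 0 < s j)
    (hle : ∑ j, q j * Real.log (σ j) ≤ ∑ j, q j * Real.log (s j)) : s = σ := by
  by_contra hne
  obtain ⟨i, hi⟩ := Function.ne_iff.1 hne
  have hgap : 0 < ∑ j, q j * (s j / σ j - 1 - Real.log (s j / σ j)) := by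
    refine Finset.sum_pos' (fun j _ ↦ mul_nonneg (hq j).le <|
      sub_nonneg.2 (Real.log_le_sub_one_of_pos (div_pos (hs₀ j) (h.pos j))))
      ⟨i, Finset.mem_univ i, mul_pos (hq i) <| sub_pos.2 ?_⟩
    exact Real.log_lt_sub_one_of_pos (div_pos (hs₀ i) (h.pos i))
      fun h_one ↦ hi ((div_eq_one_iff_eq (h.pos i).ne').1 h_one)
  linarith [h.sum_mul_log_add_le hs hs₀]

end IsProportionallyFair

end ProportionalFairness

section Rows

variable [Fintype J]

/-- The contribution of one pool with row `a` of `A` and job counts `k` to a summand of `Phi`. -/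
noncomputable def rowWeight (a : J → ℝ) (k : J → ℕ) : ℝ :=
  ((∑ j, k j).factorial : ℝ) / (∏ j, ((k j).factorial : ℝ)) * ∏ j, a j ^ k j

theorem rowWeight_nonneg {a : J → ℝ} (ha : ∀ j, 0 ≤ a j) (k : J → ℕ) : 0 ≤ rowWeight a k := by
  have : 0 ≤ ∏ j, a j ^ k j := Finset.prod_nonneg fun j _ ↦ pow_nonneg (ha j) _
  unfold rowWeight
  positivity

theorem rowWeight_pos {a : J → ℝ} {k : J → ℕ} (h : ∀ j, 0 < a j ∨ k j = 0) :
    0 < rowWeight a k := by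
  have : 0 < ∏ j, a j ^ k j := Finset.prod_pos fun j _ ↦
    (h j).elim (fun ha ↦ pow_pos ha _) fun hk ↦ by simp [hk]
  unfold rowWeight
  positivity

theorem rowWeight_eq_zero {a : J → ℝ} {k : J → ℕ} {j : J} (ha : a j = 0) (hk : k j ≠ 0) :
    rowWeight a k = 0 :=
  mul_eq_zero_of_right _ <| Finset.prod_eq_zero (Finset.mem_univ j) <| by rw [ha, zero_pow hk]

theorem prod_apply_add_single {ι M R : Type*} [Fintype ι] [DecidableEq ι] [AddZeroClass M]
    [CommMonoid R] (g : ι → M → R) (k : ι → M) (i : ι) (x : M) :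
    ∏ j, g j ((k + Pi.single i x : ι → M) j) =
      g i (k i + x) * ∏ j ∈ Finset.univ.erase i, g j (k j) := by
  rw [← Finset.mul_prod_erase _ _ (Finset.mem_univ i), Pi.add_apply, Pi.single_eq_same]
  congr 1
  refine Finset.prod_congr rfl fun j hj ↦ ?_
  rw [Pi.add_apply, Pi.single_eq_of_ne (Finset.ne_of_mem_erase hj), add_zero]

theorem rowWeight_add_single [DecidableEq J] (a : J → ℝ) (k : J → ℕ) (j : J) :
    rowWeight a (k + Pi.single j 1) * (k j + 1) = rowWeight a k * (a j * (∑ i, (k i : ℝ) + 1)) := by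
  have hsum : ∑ i, (k + Pi.single j 1 : J → ℕ) i = ∑ i, k i + 1 := by
    simp [Finset.sum_add_distrib]
  have hrest : ∏ i ∈ Finset.univ.erase j, ((k i).factorial : ℝ) ≠ 0 :=
    Finset.prod_ne_zero_iff.2 fun i _ ↦ by positivity
  unfold rowWeight
  rw [hsum, prod_apply_add_single (fun _ (n : ℕ) ↦ (n.factorial : ℝ)),
    prod_apply_add_single (fun i (n : ℕ) ↦ a i ^ n),
    ← Finset.mul_prod_erase _ (fun i ↦ ((k i).factorial : ℝ)) (Finset.mem_univ j),
    ← Finset.mul_prod_erase _ (fun i ↦ a i ^ k i) (Finset.mem_univ j),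
    Nat.factorial_succ, Nat.factorial_succ, pow_succ]
  push_cast
  field_simp

end Rows

section Arrays

variable [Fintype J] [Fintype L]

/-- The arrays `m` with column sums `N`, that is, the index set of the sum defining `Phi`. -/
noncomputable def arrays (L : Type*) [Fintype L] (N : J → ℕ) : Finset (L → J → ℕ) :=
  {m ∈ Finset.Iic (fun _ ↦ N) | ∑ l, m l = N}

@[simp]
theorem mem_arrays {N : J → ℕ} {m : L → J → ℕ} : m ∈ arrays L N ↔ ∑ l, m l = N := by
  rw [arrays, Finset.mem_filter, Finset.mem_Iic, and_iff_right_iff_imp]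
  rintro rfl l
  exact Finset.single_le_sum (fun _ _ ↦ zero_le) (Finset.mem_univ l)

/-- The summand of `Phi` at the array `m`. -/
noncomputable def arrayWeight (A : L → J → ℝ) (m : L → J → ℕ) : ℝ :=
  ∏ l, rowWeight (A l) (m l)

theorem arrayWeight_nonneg {A : L → J → ℝ} (hA : ∀ l j, 0 ≤ A l j) (m : L → J → ℕ) :
    0 ≤ arrayWeight A m :=
  Finset.prod_nonneg fun l _ ↦ rowWeight_nonneg (hA l) (m l)

theorem Phi_eq_sum_arrayWeight (A : L → J → ℝ) (N : J → ℕ) :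
    Phi A N = ∑ m ∈ arrays L N, arrayWeight A m := by
  have col_sums {m : L → J → ℕ} : (∀ j, ∑ l, m l j = N j) ↔ m ∈ arrays L N := by
    simp [funext_iff]
  unfold Phi
  rw [tsum_eq_sum (s := arrays L N) fun m hm ↦ if_neg fun h ↦ hm (col_sums.1 h.2)]
  refine Finset.sum_congr rfl fun m hm ↦ ?_
  by_cases hsupp : ∀ l j, A l j = 0 → m l j = 0
  · exact if_pos ⟨hsupp, col_sums.2 hm⟩
  · rw [if_neg fun h ↦ hsupp h.1]
    push Not at hsupp
    obtain ⟨l, j, hAlj, hmlj⟩ := hsupp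
    exact (Finset.prod_eq_zero (Finset.mem_univ l) (rowWeight_eq_zero hAlj hmlj)).symm

theorem Phi_nonneg {A : L → J → ℝ} (hA : ∀ l j, 0 ≤ A l j) (N : J → ℕ) : 0 ≤ Phi A N := by
  rw [Phi_eq_sum_arrayWeight]
  exact Finset.sum_nonneg fun m _ ↦ arrayWeight_nonneg hA m

theorem Phi_pos {A : L → J → ℝ} (hA : ∀ l j, 0 ≤ A l j) (hcol : ∀ j, ∃ l, 0 < A l j)
    (N : J → ℕ) : 0 < Phi A N := by
  choose pool hpool using hcol
  rw [Phi_eq_sum_arrayWeight]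
  refine Finset.sum_pos' (fun m _ ↦ arrayWeight_nonneg hA m)
    ⟨fun l j ↦ if l = pool j then N j else 0, ?_, ?_⟩
  · rw [mem_arrays]
    ext j
    simp
  · refine Finset.prod_pos fun l _ ↦ rowWeight_pos fun j ↦ ?_
    by_cases hl : l = pool j
    · exact Or.inl (hl ▸ hpool j)
    · exact Or.inr (if_neg hl)

/-- The total factor gained by an array when a job of queue `j` is inserted, summed over the pools
that can receive it; see `Phi_add_single`. -/
noncomputable def insertionWeight (A : L → J → ℝ) (j : J) (m : L → J → ℕ) : ℝ :=
  ∑ l, A l j * (∑ i, (m l i : ℝ) + 1)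

theorem insertionWeight_mono {A : L → J → ℝ} {j : J} (hA : ∀ l, 0 ≤ A l j) :
    Monotone (insertionWeight A j) := by
  intro m m' hm
  unfold insertionWeight
  gcongr with l _ i _
  · exact hA l
  · exact hm l i

theorem sum_insertionWeight_mul_le {A : L → J → ℝ} {s : J → ℝ} (hs : s ∈ schedulingPolytope A)
    (m : L → J → ℕ) :
    ∑ j, insertionWeight A j m * s j ≤ ∑ l, (∑ i, (m l i : ℝ) + 1) := by
  calc ∑ j, insertionWeight A j m * s j
      = ∑ l, (∑ i, (m l i : ℝ) + 1) * ∑ j, A l j * s j := by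
        simp only [insertionWeight, Finset.sum_mul, Finset.mul_sum]
        rw [Finset.sum_comm]
        exact Finset.sum_congr rfl fun l _ ↦ Finset.sum_congr rfl fun j _ ↦ by ring
    _ ≤ ∑ l, (∑ i, (m l i : ℝ) + 1) :=
        Finset.sum_le_sum fun l _ ↦ mul_le_of_le_one_right (by positivity) (hs.2 l)

end Arrays

section JobInsertion

theorem pi_single_le_iff {ι M : Type*} [DecidableEq ι] [AddCommMonoid M] [PartialOrder M]
    [CanonicallyOrderedAdd M] {f : ι → M} {i : ι} {x : M} : Pi.single i x ≤ f ↔ x ≤ f i := by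
  simp [Pi.single, update_le_iff]

variable [DecidableEq J]

/-- The array whose only job is one of queue `j` at pool `l`. -/
noncomputable def unitArray (l : L) (j : J) : L → J → ℕ := Pi.single l (Pi.single j 1)

theorem unitArray_le_iff {m : L → J → ℕ} {l : L} {j : J} : unitArray l j ≤ m ↔ m l j ≠ 0 := by
  rw [unitArray, pi_single_le_iff, pi_single_le_iff, Nat.one_le_iff_ne_zero]

variable [Fintype J]

theorem sum_add_unitArray_apply (m : L → J → ℕ) (l : L) (j : J) :
    ∑ i, (m + unitArray l j) l i = ∑ i, m l i + 1 := by
  simp [unitArray, Finset.sum_add_distrib]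

variable [Fintype L]

theorem map_addRight_unitArray_arrays (N : J → ℕ) (l : L) (j : J) :
    (arrays L N).map (addRightEmbedding (unitArray l j)) =
      {m ∈ arrays L (N + Pi.single j 1) | m l j ≠ 0} := by
  have sum_add (m : L → J → ℕ) : ∑ i, (m + unitArray l j) i = ∑ i, m i + Pi.single j 1 := by
    simp [unitArray, Finset.sum_add_distrib]
  ext m
  simp only [Finset.mem_map, mem_arrays, Finset.mem_filter, addRightEmbedding_apply]
  constructor
  · rintro ⟨m, rfl, rfl⟩
    exact ⟨sum_add m, by simp [unitArray]⟩
  · rintro ⟨hm, hmlj⟩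
    have hsub := tsub_add_cancel_of_le (unitArray_le_iff.2 hmlj)
    exact ⟨m - unitArray l j, add_right_cancel (by rw [← sum_add, hsub, hm]), hsub⟩

theorem arrayWeight_add_unitArray (A : L → J → ℝ) (m : L → J → ℕ) (l : L) (j : J) :
    arrayWeight A (m + unitArray l j) * (m l j + 1) =
      arrayWeight A m * (A l j * (∑ i, (m l i : ℝ) + 1)) := by
  unfold arrayWeight unitArray
  rw [prod_apply_add_single (fun l k ↦ rowWeight (A l) k),
    ← Finset.mul_prod_erase _ (fun i ↦ rowWeight (A i) (m i)) (Finset.mem_univ l),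
    mul_right_comm, rowWeight_add_single, mul_right_comm]

theorem sum_arrayWeight_mul_apply_mul (A : L → J → ℝ) (N : J → ℕ) (l : L) (j : J)
    (f : (L → J → ℕ) → ℝ) :
    ∑ m ∈ arrays L (N + Pi.single j 1), arrayWeight A m * m l j * f m =
      ∑ m ∈ arrays L N,
        arrayWeight A m * (A l j * (∑ i, (m l i : ℝ) + 1)) * f (m + unitArray l j) := by
  have hfilter : ∑ m ∈ arrays L (N + Pi.single j 1) with m l j ≠ 0, arrayWeight A m * m l j * f m =
      ∑ m ∈ arrays L (N + Pi.single j 1), arrayWeight A m * m l j * f m :=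
    Finset.sum_filter_of_ne fun m _ hm h ↦ hm (by simp [h])
  rw [← hfilter, ← map_addRight_unitArray_arrays, Finset.sum_map]
  refine Finset.sum_congr rfl fun m _ ↦ ?_
  rw [← arrayWeight_add_unitArray]
  simp [unitArray]

theorem sum_arrayWeight_add_single (A : L → J → ℝ) (N : J → ℕ) (j : J)
    (f : (L → J → ℕ) → ℝ) :
    (N j + 1) * ∑ m ∈ arrays L (N + Pi.single j 1), arrayWeight A m * f m =
      ∑ m ∈ arrays L N, arrayWeight A m *
        ∑ l, A l j * (∑ i, (m l i : ℝ) + 1) * f (m + unitArray l j) := by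
  have hcol {m : L → J → ℕ} (hm : m ∈ arrays L (N + Pi.single j 1)) :
      (N j + 1 : ℝ) = ∑ l, (m l j : ℝ) := by
    have := congrFun (mem_arrays.1 hm) j
    simp only [Finset.sum_apply, Pi.add_apply, Pi.single_eq_same] at this
    exact_mod_cast this.symm
  calc (N j + 1) * ∑ m ∈ arrays L (N + Pi.single j 1), arrayWeight A m * f m
      = ∑ m ∈ arrays L (N + Pi.single j 1), ∑ l, arrayWeight A m * m l j * f m := by
        rw [Finset.mul_sum]
        refine Finset.sum_congr rfl fun m hm ↦ ?_
        rw [hcol hm, ← Finset.sum_mul, ← Finset.mul_sum]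
        ring
    _ = ∑ l, ∑ m ∈ arrays L N,
          arrayWeight A m * (A l j * (∑ i, (m l i : ℝ) + 1)) * f (m + unitArray l j) := by
        rw [Finset.sum_comm]
        simp only [sum_arrayWeight_mul_apply_mul]
    _ = _ := by
        rw [Finset.sum_comm]
        simp only [Finset.mul_sum, mul_assoc]

theorem Phi_add_single (A : L → J → ℝ) (N : J → ℕ) (j : J) :
    (N j + 1) * Phi A (N + Pi.single j 1) =
      ∑ m ∈ arrays L N, arrayWeight A m * insertionWeight A j m := by
  simpa [Phi_eq_sum_arrayWeight, insertionWeight]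
    using sum_arrayWeight_add_single A N j fun _ ↦ 1

end JobInsertion

section PhiInequalities

variable [Fintype J] [Fintype L] [DecidableEq J] {A : L → J → ℝ}

theorem sum_mul_Phi_sub_single_le (hA : ∀ l j, 0 ≤ A l j) {N : J → ℕ} (hN : ∀ j, 1 ≤ N j)
    (l : L) : ∑ j, A l j * Phi A (N - Pi.single j 1) ≤ Phi A N := by
  -- The factor `(∑ i, m l i)⁻¹` turns into the inverse of `∑ i, m l i + 1` under the insertion.
  have hshift (j : J) : A l j * Phi A (N - Pi.single j 1) =
      ∑ m ∈ arrays L N, arrayWeight A m * m l j * (∑ i, (m l i : ℝ))⁻¹ := by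
    conv_rhs => rw [← tsub_add_cancel_of_le (pi_single_le_iff.2 (hN j))]
    rw [sum_arrayWeight_mul_apply_mul, Phi_eq_sum_arrayWeight, Finset.mul_sum]
    refine Finset.sum_congr rfl fun m _ ↦ ?_
    have hpos : ∑ i, (m l i : ℝ) + 1 ≠ 0 := by positivity
    rw [← Nat.cast_sum (f := (m + unitArray l j) l), sum_add_unitArray_apply]
    push_cast
    field_simp
  rw [Finset.sum_congr rfl fun j _ ↦ hshift j, Finset.sum_comm, Phi_eq_sum_arrayWeight]
  refine Finset.sum_le_sum fun m _ ↦ ?_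
  rw [← Finset.sum_mul, ← Finset.mul_sum, mul_assoc]
  exact mul_le_of_le_one_right (arrayWeight_nonneg hA m) mul_inv_le_one

theorem Phi_sub_single_div_Phi_mem_schedulingPolytope (hA : ∀ l j, 0 ≤ A l j) {N : J → ℕ}
    (hN : ∀ j, 1 ≤ N j) :
    (fun j ↦ Phi A (N - Pi.single j 1) / Phi A N) ∈ schedulingPolytope A := by
  refine ⟨fun j ↦ div_nonneg (Phi_nonneg hA _) (Phi_nonneg hA _), fun l ↦ ?_⟩
  simp only [← mul_div_assoc, ← Finset.sum_div]
  exact div_le_one_of_le₀ (sum_mul_Phi_sub_single_le hA hN l) (Phi_nonneg hA N)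

theorem sum_Phi_add_single_mul_le (hA : ∀ l j, 0 ≤ A l j) (N : J → ℕ) {s : J → ℝ}
    (hs : s ∈ schedulingPolytope A) :
    ∑ j, (N j + 1) * Phi A (N + Pi.single j 1) * s j ≤
      (∑ j, (N j : ℝ) + Fintype.card L) * Phi A N := by
  have htotal {m : L → J → ℕ} (hm : m ∈ arrays L N) :
      ∑ l, (∑ i, (m l i : ℝ) + 1) = ∑ j, (N j : ℝ) + Fintype.card L := by
    rw [Finset.sum_add_distrib, Finset.sum_comm, ← mem_arrays.1 hm]
    simp
  calc ∑ j, (N j + 1) * Phi A (N + Pi.single j 1) * s j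
      = ∑ m ∈ arrays L N, arrayWeight A m * ∑ j, insertionWeight A j m * s j := by
        simp only [Phi_add_single, Finset.sum_mul, Finset.mul_sum, mul_assoc]
        exact Finset.sum_comm
    _ ≤ ∑ m ∈ arrays L N, arrayWeight A m * (∑ j, (N j : ℝ) + Fintype.card L) :=
        Finset.sum_le_sum fun m hm ↦ mul_le_mul_of_nonneg_left
          ((sum_insertionWeight_mul_le hs m).trans_eq (htotal hm)) (arrayWeight_nonneg hA m)
    _ = (∑ j, (N j : ℝ) + Fintype.card L) * Phi A N := by
        rw [← Finset.sum_mul, ← Phi_eq_sum_arrayWeight, mul_comm]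

theorem sum_arrayWeight_mul_sq_insertionWeight_le (hA : ∀ l j, 0 ≤ A l j) (N : J → ℕ) (j : J) :
    ∑ m ∈ arrays L N, arrayWeight A m * insertionWeight A j m ^ 2 ≤
      (N j + 1) * ((N j + 2) * Phi A (N + Pi.single j 1 + Pi.single j 1)) := by
  calc ∑ m ∈ arrays L N, arrayWeight A m * insertionWeight A j m ^ 2
      ≤ ∑ m ∈ arrays L N, arrayWeight A m * ∑ l, A l j * (∑ i, (m l i : ℝ) + 1) *
          insertionWeight A j (m + unitArray l j) := by
        refine Finset.sum_le_sum fun m _ ↦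
          mul_le_mul_of_nonneg_left ?_ (arrayWeight_nonneg hA m)
        rw [sq, insertionWeight, Finset.sum_mul, ← insertionWeight]
        refine Finset.sum_le_sum fun l _ ↦ mul_le_mul_of_nonneg_left
          (insertionWeight_mono (fun l ↦ hA l j) (self_le_add_right m _))
          (mul_nonneg (hA l j) (by positivity))
    _ = (N j + 1) * ∑ m ∈ arrays L (N + Pi.single j 1),
          arrayWeight A m * insertionWeight A j m := (sum_arrayWeight_add_single A N j _).symm
    _ = (N j + 1) * ((N j + 2) * Phi A (N + Pi.single j 1 + Pi.single j 1)) := by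
        rw [← Phi_add_single, Pi.add_apply, Pi.single_eq_same]
        push_cast
        ring

theorem sq_Phi_add_single_le (hA : ∀ l j, 0 ≤ A l j) (N : J → ℕ) (j : J) :
    (N j + 1) * Phi A (N + Pi.single j 1) ^ 2 ≤
      (N j + 2) * Phi A (N + Pi.single j 1 + Pi.single j 1) * Phi A N := by
  have hCauchySchwarz : ((N j + 1) * Phi A (N + Pi.single j 1)) ^ 2 ≤
      Phi A N * ∑ m ∈ arrays L N, arrayWeight A m * insertionWeight A j m ^ 2 := by
    rw [Phi_add_single, Phi_eq_sum_arrayWeight]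
    exact Finset.sum_sq_le_sum_mul_sum_of_sq_le_mul _ (fun m _ ↦ arrayWeight_nonneg hA m)
      (fun m _ ↦ mul_nonneg (arrayWeight_nonneg hA m) (sq_nonneg _)) fun m _ ↦ by
        rw [mul_pow, sq (arrayWeight A m), mul_assoc]
  have hN : (0 : ℝ) < N j + 1 := by positivity
  refine le_of_mul_le_mul_left ?_ hN
  calc (N j + 1) * ((N j + 1) * Phi A (N + Pi.single j 1) ^ 2)
      = ((N j + 1) * Phi A (N + Pi.single j 1)) ^ 2 := by ring
    _ ≤ Phi A N * ((N j + 1) * ((N j + 2) * Phi A (N + Pi.single j 1 + Pi.single j 1))) :=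
        hCauchySchwarz.trans <| mul_le_mul_of_nonneg_left
          (sum_arrayWeight_mul_sq_insertionWeight_le hA N j) (Phi_nonneg hA N)
    _ = (N j + 1) * ((N j + 2) * Phi A (N + Pi.single j 1 + Pi.single j 1) * Phi A N) := by ring

theorem mul_sq_Phi_le (hA : ∀ l j, 0 ≤ A l j) {N : J → ℕ} {j : J} (hN : 1 ≤ N j) :
    N j * Phi A N ^ 2 ≤
      (N j + 1) * Phi A (N + Pi.single j 1) * Phi A (N - Pi.single j 1) := by
  have h := sq_Phi_add_single_le hA (N - Pi.single j 1) j
  rw [tsub_add_cancel_of_le (pi_single_le_iff.2 hN), Pi.sub_apply, Pi.single_eq_same,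
    Nat.cast_sub hN, Nat.cast_one, sub_add_cancel] at h
  convert h using 3
  ring

end PhiInequalities

section Convergence

/-- Since `a i * b i ≥ 1` forces `a i + b i ≥ 2`, the two bounds leave a total slack of only `δ`. -/
theorem sq_mul_sub_one_le {ι : Type*} {t : Finset ι} {w a b : ι → ℝ} {δ : ℝ}
    (hw : ∀ i ∈ t, 0 ≤ w i) (ha : ∀ i ∈ t, 0 ≤ a i) (hab : ∀ i ∈ t, 1 ≤ a i * b i)
    (hsum_a : ∑ i ∈ t, w i * a i ≤ ∑ i ∈ t, w i)
    (hsum_b : ∑ i ∈ t, w i * b i ≤ ∑ i ∈ t, w i + δ) {i : ι} (hi : i ∈ t) :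
    (w i * (a i - 1)) ^ 2 ≤ (∑ i ∈ t, w i) * δ := by
  have hgap : ∀ i ∈ t, 0 ≤ w i * (a i + b i - 2) := by
    intro i hi
    have hb : 0 ≤ b i := by
      by_contra! hb
      linarith [hab i hi, mul_nonpos_of_nonneg_of_nonpos (ha i hi) hb.le]
    exact mul_nonneg (hw i hi) (by nlinarith [hab i hi, ha i hi, sq_nonneg (a i - b i)])
  have hgap_le : w i * (a i + b i - 2) ≤ δ := by
    refine (Finset.single_le_sum hgap hi).trans ?_
    simp only [mul_sub, mul_add, Finset.sum_sub_distrib, Finset.sum_add_distrib, ← Finset.sum_mul]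
    linarith
  have ha_le : w i * a i ≤ ∑ i ∈ t, w i :=
    (Finset.single_le_sum (fun i hi ↦ mul_nonneg (hw i hi) (ha i hi)) hi).trans hsum_a
  calc (w i * (a i - 1)) ^ 2 = w i ^ 2 * (a i - 1) ^ 2 := mul_pow _ _ _
    _ ≤ w i ^ 2 * (a i * (a i + b i - 2)) := by gcongr; linarith [hab i hi]
    _ = (w i * a i) * (w i * (a i + b i - 2)) := by ring
    _ ≤ (∑ i ∈ t, w i) * δ := mul_le_mul ha_le hgap_le (hgap i hi) (Finset.sum_nonneg hw)

variable [Fintype J] [Fintype L] [DecidableEq J] {A : L → J → ℝ} {σ : J → ℝ}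

theorem IsProportionallyFair.sq_mul_Phi_ratio_sub_one_le (hA : ∀ l j, 0 ≤ A l j)
    (hcol : ∀ j, ∃ l, 0 < A l j) {N : J → ℕ} (hN : ∀ j, 1 ≤ N j)
    (hσ : IsProportionallyFair A (fun j ↦ (N j : ℝ)) σ) (j : J) :
    (N j * (Phi A (N - Pi.single j 1) / Phi A N / σ j - 1)) ^ 2 ≤
      (∑ i, (N i : ℝ)) * Fintype.card L := by
  have hΦ := Phi_pos hA hcol N
  have hN₀ (i : J) : (0 : ℝ) < N i := by exact_mod_cast hN i
  refine sq_mul_sub_one_le (w := fun i ↦ (N i : ℝ))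
    (a := fun i ↦ Phi A (N - Pi.single i 1) / Phi A N / σ i)
    (b := fun i ↦ (N i + 1) * Phi A (N + Pi.single i 1) * σ i / (N i * Phi A N))
    (fun i _ ↦ (hN₀ i).le)
    (fun i _ ↦ div_nonneg (div_nonneg (Phi_nonneg hA _) hΦ.le) (hσ.pos i).le) (fun i _ ↦ ?_)
    (hσ.sum_mul_div_le _ (Phi_sub_single_div_Phi_mem_schedulingPolytope hA hN)) ?_
    (Finset.mem_univ j)
  · have := (hσ.pos i).ne'
    calc (1 : ℝ) ≤ (N i + 1) * Phi A (N + Pi.single i 1) * Phi A (N - Pi.single i 1) /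
          (N i * Phi A N ^ 2) :=
          (one_le_div (mul_pos (hN₀ i) (pow_pos hΦ 2))).2 (mul_sq_Phi_le hA (hN i))
      _ = _ := by field_simp
  · calc ∑ i, N i * ((N i + 1) * Phi A (N + Pi.single i 1) * σ i / (N i * Phi A N))
        = (∑ i, (N i + 1) * Phi A (N + Pi.single i 1) * σ i) / Phi A N := by
          rw [Finset.sum_div]
          exact Finset.sum_congr rfl fun i _ ↦ by have := (hN₀ i).ne'; field_simp
      _ ≤ ∑ i, (N i : ℝ) + Fintype.card L :=
          (div_le_iff₀ hΦ).2 (sum_Phi_add_single_mul_le hA N hσ.mem)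

theorem IsProportionallyFair.tendsto_Phi_sub_single_div_Phi (hA : ∀ l j, 0 ≤ A l j)
    (hcol : ∀ j, ∃ l, 0 < A l j) {Q : J → ℕ} (hQ : ∀ j, 1 ≤ Q j)
    (hσ : IsProportionallyFair A (fun j ↦ (Q j : ℝ)) σ) (j : J) :
    Tendsto (fun c : ℕ ↦ Phi A (c • Q - Pi.single j 1) / Phi A (c • Q)) atTop (𝓝 (σ j)) := by
  let x (c : ℕ) : ℝ := Phi A (c • Q - Pi.single j 1) / Phi A (c • Q)
  have hQj : (0 : ℝ) < Q j := by exact_mod_cast hQ j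
  have hbound : ∀ᶠ c : ℕ in atTop,
      (x c / σ j - 1) ^ 2 ≤ (∑ i, (Q i : ℝ)) * Fintype.card L / Q j ^ 2 / c := by
    filter_upwards [eventually_gt_atTop 0] with c hc
    have hc₀ : (0 : ℝ) < c := by exact_mod_cast hc
    have hcQ (i : J) : ((c • Q) i : ℝ) = c * Q i := by simp
    have hfair : IsProportionallyFair A (fun i ↦ ((c • Q) i : ℝ)) σ := by
      simpa only [hcQ] using hσ.const_mul hc₀.le
    have hcQ_pos (i : J) : 1 ≤ (c • Q) i := Nat.mul_pos hc (hQ i)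
    have h := hfair.sq_mul_Phi_ratio_sub_one_le hA hcol hcQ_pos j
    simp only [hcQ, ← Finset.mul_sum] at h
    rw [le_div_iff₀ hc₀, le_div_iff₀ (pow_pos hQj 2)]
    refine le_of_mul_le_mul_left ?_ hc₀
    calc c * ((x c / σ j - 1) ^ 2 * c * Q j ^ 2) = (c * Q j * (x c / σ j - 1)) ^ 2 := by ring
      _ ≤ c * (∑ i, (Q i : ℝ)) * Fintype.card L := h
      _ = c * ((∑ i, (Q i : ℝ)) * Fintype.card L) := mul_assoc _ _ _
  have hsq : Tendsto (fun c ↦ (x c / σ j - 1) ^ 2) atTop (𝓝 0) :=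
    squeeze_zero' (Eventually.of_forall fun c ↦ sq_nonneg _) hbound
      (tendsto_const_div_atTop_nhds_zero_nat _)
  have hratio : Tendsto (fun c ↦ x c / σ j - 1) atTop (𝓝 0) :=
    (tendsto_zero_iff_abs_tendsto_zero _).2 <| by
      simpa [Function.comp_def, Real.sqrt_sq_eq_abs] using hsq.sqrt
  suffices Tendsto x atTop (𝓝 (σ j)) from this
  simpa [div_mul_cancel₀ _ (hσ.pos j).ne'] using (hratio.add_const 1).mul_const (σ j)

end Convergence

end StoreForward

/-- Store-Forward converges to proportional fairness: let `Q ∈ ℕ^J` with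
`Q j ≥ 1` for every `j`.  The function `s ↦ ∑_j Q j * log (s j)` attains its maximum over
`P ∩ (0,∞)^J` (where `P = {s : s ≥ 0, ∀ l, ∑_j A l j * s j ≤ 1}`) at a unique point
`σPF`, and for every `j` the Store-Forward allocation converges to it:
`Φ(cQ - e_j)/Φ(cQ) → σPF j` as `c → ∞` along the naturals. -/
theorem storeForward_tendsto_proportionalFairness
    {J L : Type*} [Fintype J] [Nonempty J] [Fintype L] [Nonempty L] [DecidableEq J]
    (A : L → J → ℝ) (hA : ∀ l j, 0 ≤ A l j)
    (hcol : ∀ j, ∃ l, 0 < A l j)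
    (Q : J → ℕ) (hQ : ∀ j, 1 ≤ Q j) :
    ∃ σPF : J → ℝ,
      ((∀ j, 0 < σPF j) ∧ (∀ l, ∑ j, A l j * σPF j ≤ 1) ∧
        (∀ s : J → ℝ, (∀ j, 0 < s j) → (∀ l, ∑ j, A l j * s j ≤ 1) →
          ∑ j, (Q j : ℝ) * Real.log (s j) ≤ ∑ j, (Q j : ℝ) * Real.log (σPF j)) ∧
        (∀ σ' : J → ℝ, (∀ j, 0 < σ' j) → (∀ l, ∑ j, A l j * σ' j ≤ 1) →
          (∀ s : J → ℝ, (∀ j, 0 < s j) → (∀ l, ∑ j, A l j * s j ≤ 1) →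
            ∑ j, (Q j : ℝ) * Real.log (s j) ≤ ∑ j, (Q j : ℝ) * Real.log (σ' j)) →
          σ' = σPF)) ∧
      ∀ j, Filter.Tendsto
        (fun c : ℕ =>
          Phi A (fun j' => c * Q j' - if j' = j then 1 else 0) / Phi A (fun j' => c * Q j'))
        Filter.atTop (nhds (σPF j)) := by
  have hQ₀ (j : J) : (0 : ℝ) < Q j := by exact_mod_cast hQ j
  obtain ⟨σ, hσ⟩ := StoreForward.exists_isProportionallyFair hA hcol hQ₀
  refine ⟨σ, ⟨hσ.pos, hσ.mem.2, fun s hs₀ hs ↦ ?_, fun s hs₀ hs hmax ↦ ?_⟩, fun j ↦ ?_⟩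
  · exact hσ.sum_mul_log_le (fun j ↦ (hQ₀ j).le) ⟨fun j ↦ (hs₀ j).le, hs⟩ hs₀
  · exact hσ.eq_of_sum_mul_log_le hQ₀ ⟨fun j ↦ (hs₀ j).le, hs⟩ hs₀ (hmax σ hσ.pos hσ.mem.2)
  · have hsub (c : ℕ) : (fun j' ↦ c * Q j' - if j' = j then 1 else 0) = c • Q - Pi.single j 1 := by
      ext j'
      simp [Pi.single_apply]
    simp only [hsub]
    exact hσ.tendsto_Phi_sub_single_div_Phi hA hcol hQ j
end

section
/- Logarithmic asymptotics of the Store-Forward normalizing constant: for every Q ∈ ℕ^J with Q_j ≥ 1 for all j, lim_{c → ∞, c ∈ ℕ} (1/c) · log Φ(cQ) = − max { ∑_{j ∈ J} Q_j log s_j : s ∈ P, s_j > 0 for all j }. -/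
open scoped BigOperators Classical

/-!
Let `w = Q` and `N = ∑ j, w j`. Maximizing the Nash product `∏ j, y j ^ w j` over the convex hull
of the rows of `A` gives a point `y` whose first order condition says that `s j = w j / (N * y j)`
lies in the scheduling polytope; the convex coefficients of `y`, times `N`, are Lagrange multipliers
`lam l` for `s`. By weak duality `s` is the maximizer in the theorem.

Each summand of `Φ(q)` times `∏ j, s j ^ q j` is a product of terms of multinomial expansions of
`(∑ j, A l j * s j) ^ n ≤ 1`, and there are only polynomially many summands: this is the upper
bound. For the lower bound keep only the summand with `m l j ≈ c * lam l * A l j * s j`. Its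
exponential rate is, by Stirling's formula, a relative entropy that complementary slackness
collapses to `-∑ j, w j * log (s j)`.
-/

open Filter Finset Real Topology
open scoped Nat

/-! ### Factorials along sequences of linear growth -/

theorem mul_log_sub_le_log_factorial (n : ℕ) : n * log n - n ≤ log (n ! : ℝ) := by
  rcases n.eq_zero_or_pos with rfl | hn
  · simp
  have h := log_le_log (by positivity) (pow_div_factorial_le_exp _ n.cast_nonneg n)
  rw [log_div (by positivity) (by positivity), log_pow, log_exp] at h
  linarith

theorem log_factorial_le_mul_log_sub_add (n : ℕ) :
    log (n ! : ℝ) ≤ n * log n - n + (1 + log (n + 1)) := by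
  rcases n.eq_zero_or_pos with rfl | hn
  · simp
  have hseq : log (Stirling.stirlingSeq n) ≤ 1 - log 2 / 2 := by
    have h := Stirling.log_stirlingSeq'_antitone (Nat.zero_le (n - 1))
    simpa [Nat.sub_add_cancel hn, log_div, log_sqrt] using h
  rw [Stirling.log_stirlingSeq_formula, log_div (by positivity) (by positivity), log_exp,
    log_mul two_ne_zero (by positivity)] at hseq
  have hlog : 0 ≤ log n := log_natCast_nonneg n
  have hmono : log n ≤ log (n + 1) := log_le_log (by positivity) (by linarith)
  linarith

section LinearGrowth

variable {m : ℕ → ℕ} {x : ℝ}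

theorem tendsto_log_add_one_div (hm : Tendsto (fun c : ℕ ↦ (m c : ℝ) / c) atTop (𝓝 x)) :
    Tendsto (fun c : ℕ ↦ log (m c + 1) / c) atTop (𝓝 0) := by
  have hlog (y : ℝ) (hy : 0 < y) : log y ≤ 2 * √y := by
    have h := log_le_self (sqrt_nonneg y)
    rw [log_sqrt hy.le] at h
    linarith
  have hsqrt : Tendsto (fun c : ℕ ↦ 2 * √(((m c : ℝ) / c + 1 / c) * (1 / c))) atTop (𝓝 0) := by
    have h := ((hm.add tendsto_one_div_atTop_nhds_zero_nat).mul
      tendsto_one_div_atTop_nhds_zero_nat).sqrt.const_mul 2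
    simpa using h
  refine squeeze_zero (fun c ↦ div_nonneg (log_nonneg (by simp)) c.cast_nonneg) (fun c ↦ ?_) hsqrt
  calc log (m c + 1) / c ≤ 2 * √(m c + 1) / c := by gcongr; exact hlog _ (by positivity)
    _ = 2 * √(((m c : ℝ) / c + 1 / c) * (1 / c)) := by
      rw [← add_div, mul_one_div, div_div, sqrt_div (by positivity),
        sqrt_mul_self c.cast_nonneg, mul_div_assoc]

theorem tendsto_log_factorial_sub_div (hm : Tendsto (fun c : ℕ ↦ (m c : ℝ) / c) atTop (𝓝 x)) :
    Tendsto (fun c : ℕ ↦ (log ((m c)! : ℝ) - m c * log c) / c) atTop (𝓝 (x * log x - x)) := by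
  have herror : Tendsto (fun c : ℕ ↦ (log ((m c)! : ℝ) - (m c * log (m c) - m c)) / c)
      atTop (𝓝 0) := by
    have hbound : Tendsto (fun c : ℕ ↦ (1 + log (m c + 1)) / c) atTop (𝓝 0) := by
      simpa [add_div] using tendsto_one_div_atTop_nhds_zero_nat.add (tendsto_log_add_one_div hm)
    refine squeeze_zero (fun c ↦ ?_) (fun c ↦ ?_) hbound
    · exact div_nonneg (sub_nonneg.2 (mul_log_sub_le_log_factorial _)) c.cast_nonneg
    · gcongr
      linarith [log_factorial_le_mul_log_sub_add (m c)]
  have hmain : Tendsto (fun c : ℕ ↦ (m c : ℝ) / c * log ((m c : ℝ) / c) - (m c : ℝ) / c) atTop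
      (𝓝 (x * log x - x)) :=
    ((continuous_mul_log.tendsto x).comp hm).sub hm
  rw [← zero_add (x * log x - x)]
  refine (herror.add hmain).congr' ?_
  filter_upwards [eventually_ne_atTop 0] with c hc
  rcases eq_or_ne (m c) 0 with h | h
  · simp [h]
  · rw [log_div (by positivity) (by positivity)]
    field_simp
    ring

end LinearGrowth

/-! ### Terms of the multinomial expansion -/

section MultinomialTerm

variable {J : Type*} [Fintype J]

/-- The term with exponents `k` in the multinomial expansion of `(∑ j, a j) ^ (∑ j, k j)`. -/
noncomputable def multinomialTerm (a : J → ℝ) (k : J → ℕ) : ℝ :=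
  Nat.multinomial univ k * ∏ j, a j ^ k j

theorem cast_multinomial_eq_div (k : J → ℕ) :
    (Nat.multinomial univ k : ℝ) = ((∑ j, k j)! : ℝ) / ∏ j, ((k j)! : ℝ) := by
  rw [eq_div_iff (by positivity), mul_comm, ← Nat.multinomial_spec univ k]
  push_cast
  rfl

theorem multinomialTerm_nonneg {a : J → ℝ} (ha : ∀ j, 0 ≤ a j) (k : J → ℕ) :
    0 ≤ multinomialTerm a k :=
  mul_nonneg (Nat.cast_nonneg _) (prod_nonneg fun j _ ↦ pow_nonneg (ha j) _)

theorem pow_ne_zero_of_imp {M : Type*} [MonoidWithZero M] [NoZeroDivisors M] [Nontrivial M] {b : M}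
    {n : ℕ} (h : b = 0 → n = 0) : b ^ n ≠ 0 := fun h0 ↦
  have ⟨hb, hn⟩ := pow_eq_zero_iff'.1 h0
  hn (h hb)

theorem multinomialTerm_ne_zero {a : J → ℝ} {k : J → ℕ} (hk : ∀ j, a j = 0 → k j = 0) :
    multinomialTerm a k ≠ 0 :=
  mul_ne_zero (Nat.cast_ne_zero.2 (Nat.multinomial_pos _ _).ne')
    (prod_ne_zero_iff.2 fun j _ ↦ pow_ne_zero_of_imp (hk j))

theorem multinomialTerm_pos {a : J → ℝ} {k : J → ℕ} (ha : ∀ j, 0 ≤ a j)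
    (hk : ∀ j, a j = 0 → k j = 0) : 0 < multinomialTerm a k :=
  (multinomialTerm_nonneg ha k).lt_of_ne' (multinomialTerm_ne_zero hk)

theorem multinomialTerm_mul (a s : J → ℝ) (k : J → ℕ) :
    multinomialTerm (fun j ↦ a j * s j) k = multinomialTerm a k * ∏ j, s j ^ k j := by
  simp only [multinomialTerm, mul_pow, prod_mul_distrib, mul_assoc]

theorem multinomialTerm_le_one {a : J → ℝ} (ha : ∀ j, 0 ≤ a j) (hsum : ∑ j, a j ≤ 1)
    (k : J → ℕ) : multinomialTerm a k ≤ 1 :=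
  calc multinomialTerm a k ≤ ∑ i ∈ piAntidiag univ (∑ j, k j), multinomialTerm a i :=
        single_le_sum (fun i _ ↦ multinomialTerm_nonneg ha i) (by simp)
    _ = (∑ j, a j) ^ ∑ j, k j := (sum_pow_eq_sum_piAntidiag univ a _).symm
    _ ≤ 1 := pow_le_one₀ (sum_nonneg fun j _ ↦ ha j) hsum

theorem log_multinomialTerm {a : J → ℝ} {k : J → ℕ} (hk : ∀ j, a j = 0 → k j = 0) :
    log (multinomialTerm a k) =
      log ((∑ j, k j)! : ℝ) - ∑ j, log ((k j)! : ℝ) + ∑ j, k j * log (a j) := by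
  have hpow : ∀ j ∈ univ, a j ^ k j ≠ 0 := fun j _ ↦ pow_ne_zero_of_imp (hk j)
  rw [multinomialTerm, cast_multinomial_eq_div, log_mul (by positivity) (prod_ne_zero_iff.2 hpow),
    log_div (by positivity) (by positivity), log_prod (fun j _ ↦ by positivity), log_prod hpow]
  simp only [log_pow]

/-- The limit is minus the Kullback–Leibler divergence of `x` from `(∑ i, x i) • a`. -/
theorem tendsto_log_multinomialTerm_div {a x : J → ℝ} {k : ℕ → J → ℕ}
    (hk : ∀ c j, a j = 0 → k c j = 0)
    (hx : ∀ j, Tendsto (fun c : ℕ ↦ (k c j : ℝ) / c) atTop (𝓝 (x j))) :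
    Tendsto (fun c : ℕ ↦ log (multinomialTerm a (k c)) / c) atTop
      (𝓝 (∑ j, x j * log (a j * (∑ i, x i) / x j))) := by
  set X := ∑ i, x i with hX
  have hsum : Tendsto (fun c : ℕ ↦ ((∑ j, k c j : ℕ) : ℝ) / c) atTop (𝓝 X) := by
    simpa only [Nat.cast_sum, sum_div] using tendsto_finsetSum univ fun j _ ↦ hx j
  have hlim := ((tendsto_log_factorial_sub_div hsum).sub
    (tendsto_finsetSum univ fun j _ ↦ tendsto_log_factorial_sub_div (hx j))).add
    (tendsto_finsetSum univ fun j _ ↦ (hx j).mul_const (log (a j)))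
  have hvalue : X * log X - X - ∑ j, (x j * log (x j) - x j) + ∑ j, x j * log (a j) =
      ∑ j, x j * log (a j * X / x j) := by
    have hterm (j : J) : x j * log (a j * X / x j) =
        x j * log X - (x j * log (x j) - x j) + x j * log (a j) - x j := by
      have hx0 (i : J) : 0 ≤ x i :=
        ge_of_tendsto' (hx i) fun c ↦ div_nonneg (Nat.cast_nonneg _) (Nat.cast_nonneg _)
      rcases eq_or_ne (x j) 0 with h | h
      · simp [h]
      have hXpos : 0 < X :=
        ((hx0 j).lt_of_ne' h).trans_le (single_le_sum (fun i _ ↦ hx0 i) (mem_univ j))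
      have ha : a j ≠ 0 := fun ha ↦
        h (tendsto_nhds_unique (hx j) (by simp [hk _ j ha]))
      rw [log_div (mul_ne_zero ha hXpos.ne') h, log_mul ha hXpos.ne']
      ring
    simp only [hterm, sum_add_distrib, sum_sub_distrib, ← sum_mul, ← hX]
    ring
  rw [← hvalue]
  refine hlim.congr fun c ↦ ?_
  rw [log_multinomialTerm (hk c)]
  simp only [div_mul_eq_mul_div, ← sum_div, ← sub_div, ← add_div, sum_sub_distrib, ← sum_mul,
    Nat.cast_sum]
  ring

end MultinomialTerm

/-! ### Nash products and Lagrange multipliers -/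

section NashProduct

variable {J : Type*} [Fintype J] {K : Set (J → ℝ)} {w y z : J → ℝ}

theorem sum_mul_div_le_of_isLocalMaxOn (hK : Convex ℝ K)
    (hmax : IsLocalMaxOn (fun v ↦ ∑ j, w j * log (v j)) K y) (hy : y ∈ K) (hy0 : ∀ j, y j ≠ 0)
    (hz : z ∈ K) : ∑ j, w j * (z j / y j) ≤ ∑ j, w j := by
  have hderiv : HasFDerivAt (fun v : J → ℝ ↦ ∑ j, w j * log (v j))
      (∑ j, w j • (y j)⁻¹ • (ContinuousLinearMap.proj j : (J → ℝ) →L[ℝ] ℝ)) y :=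
    HasFDerivAt.fun_sum fun j _ ↦ ((hasFDerivAt_apply j y).log (hy0 j)).const_mul (w j)
  have hle := hmax.hasFDerivWithinAt_nonpos hderiv.hasFDerivWithinAt
    (sub_mem_posTangentConeAt_of_segment_subset (hK.segment_subset hy hz))
  rw [_root_.sum_apply] at hle
  rw [← sub_nonpos, ← sum_sub_distrib]
  refine (sum_congr rfl fun j _ ↦ ?_).trans_le hle
  change _ = w j * ((y j)⁻¹ * (z j - y j))
  rw [mul_sub, inv_mul_cancel₀ (hy0 j)]
  ring

theorem exists_isMaxOn_prod_rpow (hK : IsCompact K) (hnonneg : ∀ v ∈ K, ∀ j, 0 ≤ v j)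
    (hpos : ∃ v ∈ K, ∀ j, 0 < v j) (hw : ∀ j, 0 < w j) :
    ∃ y ∈ K, (∀ j, 0 < y j) ∧ IsMaxOn (fun v ↦ ∏ j, v j ^ w j) K y := by
  obtain ⟨u, huK, hu⟩ := hpos
  have hcont : Continuous fun v : J → ℝ ↦ ∏ j, v j ^ w j :=
    continuous_finsetProd _ fun j _ ↦ (continuous_apply j).rpow_const fun _ ↦ .inr (hw j).le
  obtain ⟨y, hyK, hmax⟩ := hK.exists_isMaxOn ⟨u, huK⟩ hcont.continuousOn
  refine ⟨y, hyK, fun j ↦ (hnonneg y hyK j).lt_of_ne' fun hj ↦ ?_, hmax⟩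
  have hprod : 0 < ∏ j, y j ^ w j :=
    (prod_pos fun j _ ↦ rpow_pos_of_pos (hu j) _).trans_le (hmax huK)
  exact hprod.ne' (prod_eq_zero (mem_univ j) (by rw [hj, zero_rpow (hw j).ne']))

theorem isLocalMaxOn_sum_mul_log (hmax : IsMaxOn (fun v ↦ ∏ j, v j ^ w j) K y)
    (hy : ∀ j, 0 < y j) : IsLocalMaxOn (fun v ↦ ∑ j, w j * log (v j)) K y := by
  have hlog {v : J → ℝ} (hv : ∀ j, 0 < v j) : ∑ j, w j * log (v j) = log (∏ j, v j ^ w j) := by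
    rw [log_prod fun j _ ↦ (rpow_pos_of_pos (hv j) _).ne']
    exact sum_congr rfl fun j _ ↦ (log_rpow (hv j) _).symm
  have hnear : ∀ᶠ v in 𝓝[K] y, ∀ j, 0 < v j := nhdsWithin_le_nhds <|
    eventually_all.2 fun j ↦ (continuous_apply j).continuousAt.eventually (lt_mem_nhds (hy j))
  filter_upwards [hnear, self_mem_nhdsWithin] with v hv hvK
  rw [hlog hv, hlog hy]
  exact log_le_log (prod_pos fun j _ ↦ rpow_pos_of_pos (hv j) _) (hmax hvK)

end NashProduct

section KKT

variable {J L : Type*} [Fintype J] [Fintype L] {A : L → J → ℝ} {w : J → ℝ} {lam : L → ℝ}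
  {s : J → ℝ}

/-- The Karush–Kuhn–Tucker conditions for maximizing `∑ j, w j * log (s j)` over the positive `s`
with `∑ j, A l j * s j ≤ 1` for all `l`: `lam` are the multipliers of these constraints, and
stationarity `∑ l, lam l * A l j = w j / s j` is written without division. -/
structure IsKKTPair (A : L → J → ℝ) (w : J → ℝ) (lam : L → ℝ) (s : J → ℝ) : Prop where
  pos : ∀ j, 0 < s j
  feasible : ∀ l, ∑ j, A l j * s j ≤ 1
  multiplier_nonneg : ∀ l, 0 ≤ lam l
  stationary : ∀ j, (∑ l, lam l * A l j) * s j = w j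
  slackness : ∀ l, lam l * ∑ j, A l j * s j = lam l

theorem sum_multiplier_mul_sum (A : L → J → ℝ) (lam : L → ℝ) (t : J → ℝ) :
    ∑ l, lam l * ∑ j, A l j * t j = ∑ j, (∑ l, lam l * A l j) * t j := by
  simp only [mul_sum, sum_mul, mul_assoc]
  exact sum_comm

theorem IsKKTPair.sum_multiplier (h : IsKKTPair A w lam s) : ∑ l, lam l = ∑ j, w j := by
  rw [← sum_congr rfl fun l _ ↦ h.slackness l, sum_multiplier_mul_sum]
  exact sum_congr rfl fun j _ ↦ h.stationary j

theorem IsKKTPair.sum_mul_log_le (h : IsKKTPair A w lam s) (hw : ∀ j, 0 ≤ w j) {t : J → ℝ}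
    (ht : ∀ j, 0 < t j) (hfeas : ∀ l, ∑ j, A l j * t j ≤ 1) :
    ∑ j, w j * log (t j) ≤ ∑ j, w j * log (s j) := by
  have htangent : ∑ j, w j * (log (t j) - log (s j)) ≤ 0 :=
    calc ∑ j, w j * (log (t j) - log (s j)) ≤ ∑ j, w j * (t j / s j - 1) := by
          refine sum_le_sum fun j _ ↦ mul_le_mul_of_nonneg_left ?_ (hw j)
          rw [← log_div (ht j).ne' (h.pos j).ne']
          exact log_le_sub_one_of_pos (div_pos (ht j) (h.pos j))
      _ = ∑ j, ((∑ l, lam l * A l j) * t j - w j) := by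
          refine sum_congr rfl fun j _ ↦ ?_
          rw [← h.stationary j]
          field_simp [(h.pos j).ne']
      _ = ∑ l, lam l * ∑ j, A l j * t j - ∑ l, lam l := by
          rw [sum_sub_distrib, sum_multiplier_mul_sum, h.sum_multiplier]
      _ ≤ 0 := sub_nonpos.2 <| sum_le_sum fun l _ ↦
          mul_le_of_le_one_right (h.multiplier_nonneg l) (hfeas l)
  simpa only [mul_sub, sum_sub_distrib, sub_nonpos] using htangent

theorem IsKKTPair.isGreatest (h : IsKKTPair A w lam s) (hw : ∀ j, 0 ≤ w j) :
    IsGreatest ((fun t : J → ℝ ↦ ∑ j, w j * log (t j)) ''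
      {t | (∀ j, 0 < t j) ∧ ∀ l, ∑ j, A l j * t j ≤ 1}) (∑ j, w j * log (s j)) := by
  refine ⟨⟨s, ⟨h.pos, h.feasible⟩, rfl⟩, ?_⟩
  rintro _ ⟨t, ⟨ht, hfeas⟩, rfl⟩
  exact h.sum_mul_log_le hw ht hfeas

/-- Complementary slackness comes for free: `∑ l, lam l` and `∑ l, lam l * ∑ j, A l j * s j` have
the same value. -/
theorem isKKTPair_of_sum_multiplier (hs : ∀ j, 0 < s j) (hfeas : ∀ l, ∑ j, A l j * s j ≤ 1)
    (hlam : ∀ l, 0 ≤ lam l) (hstat : ∀ j, (∑ l, lam l * A l j) * s j = w j)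
    (hsum : ∑ l, lam l = ∑ j, w j) : IsKKTPair A w lam s := by
  have htotal : ∑ l, lam l * ∑ j, A l j * s j = ∑ l, lam l := by
    rw [sum_multiplier_mul_sum, hsum]
    exact sum_congr rfl fun j _ ↦ hstat j
  refine ⟨hs, hfeas, hlam, hstat, fun l ↦ ?_⟩
  exact (sum_eq_sum_iff_of_le fun l _ ↦ mul_le_of_le_one_right (hlam l) (hfeas l)).1 htotal l
    (mem_univ l)

theorem exists_mem_stdSimplex_forall_sum_mul_div_le [Nonempty L] (hA : ∀ l j, 0 ≤ A l j)
    (hcol : ∀ j, ∃ l, 0 < A l j) (hw : ∀ j, 0 < w j) :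
    ∃ p ∈ stdSimplex ℝ L, (∀ j, 0 < ∑ l, p l * A l j) ∧
      ∀ l, ∑ j, w j * (A l j / ∑ i, p i * A i j) ≤ ∑ j, w j := by
  set T := Fintype.linearCombination ℝ A
  have hT (p : L → ℝ) (j : J) : T p j = ∑ l, p l * A l j := by
    simp [T, Fintype.linearCombination_apply]
  have hnonneg : ∀ v ∈ T '' stdSimplex ℝ L, ∀ j, 0 ≤ v j := by
    rintro _ ⟨p, hp, rfl⟩ j
    exact hT p j ▸ sum_nonneg fun l _ ↦ mul_nonneg (hp.1 l) (hA l j)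
  have hpos : ∃ v ∈ T '' stdSimplex ℝ L, ∀ j, 0 < v j := by
    refine ⟨_, ⟨fun _ ↦ (Fintype.card L : ℝ)⁻¹, ⟨fun _ ↦ by positivity, by simp⟩, rfl⟩, fun j ↦ ?_⟩
    rw [hT, ← mul_sum]
    obtain ⟨l, hl⟩ := hcol j
    exact mul_pos (by positivity) (sum_pos' (fun i _ ↦ hA i j) ⟨l, mem_univ l, hl⟩)
  obtain ⟨_, ⟨p, hp, rfl⟩, hy, hmax⟩ := exists_isMaxOn_prod_rpow
    ((isCompact_stdSimplex ℝ L).image T.continuous_of_finiteDimensional) hnonneg hpos hw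
  refine ⟨p, hp, fun j ↦ hT p j ▸ hy j, fun l ↦ ?_⟩
  have hrow : A l ∈ T '' stdSimplex ℝ L := ⟨Pi.single l 1, single_mem_stdSimplex ℝ l, by simp [T]⟩
  simpa only [hT] using sum_mul_div_le_of_isLocalMaxOn
    ((convex_stdSimplex ℝ L).linear_image T) (isLocalMaxOn_sum_mul_log hmax hy) ⟨p, hp, rfl⟩
    (fun j ↦ (hy j).ne') hrow

theorem exists_isKKTPair [Nonempty J] (hA : ∀ l j, 0 ≤ A l j) (hcol : ∀ j, ∃ l, 0 < A l j)
    (hw : ∀ j, 0 < w j) : ∃ lam s, IsKKTPair A w lam s := by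
  have : Nonempty L := let ⟨l, _⟩ := hcol (Classical.arbitrary J); ⟨l⟩
  obtain ⟨p, ⟨hp, hp1⟩, hy, hle⟩ := exists_mem_stdSimplex_forall_sum_mul_div_le hA hcol hw
  set N := ∑ j, w j
  have hN : 0 < N := sum_pos (fun j _ ↦ hw j) univ_nonempty
  refine ⟨fun l ↦ N * p l, fun j ↦ w j / (N * ∑ l, p l * A l j), isKKTPair_of_sum_multiplier
    (fun j ↦ div_pos (hw j) (mul_pos hN (hy j))) (fun l ↦ ?_) (fun l ↦ mul_nonneg hN.le (hp l))
    (fun j ↦ ?_) (by rw [← mul_sum, hp1, mul_one])⟩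
  · calc ∑ j, A l j * (w j / (N * ∑ i, p i * A i j))
        = (∑ j, w j * (A l j / ∑ i, p i * A i j)) / N := by
          rw [sum_div]
          exact sum_congr rfl fun j _ ↦ by field_simp
      _ ≤ 1 := (div_le_one hN).2 (hle l)
  · simp only [mul_assoc, ← mul_sum]
    rw [← mul_assoc, mul_div_cancel₀ _ (mul_pos hN (hy j)).ne']

end KKT

/-! ### Integer arrays with prescribed column sums -/

theorem exists_nat_sum_eq_tendsto_div {L : Type*} [Fintype L] {x : L → ℝ} {q : ℕ}
    (hx : ∀ l, 0 ≤ x l) (hsum : ∑ l, x l = q) :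
    ∃ m : ℕ → L → ℕ, (∀ c, ∑ l, m c l = c * q) ∧ (∀ c l, x l = 0 → m c l = 0) ∧
      ∀ l, Tendsto (fun c : ℕ ↦ (m c l : ℝ) / c) atTop (𝓝 (x l)) := by
  by_cases hzero : ∀ l, x l = 0
  · obtain rfl : q = 0 := by simpa [hzero, eq_comm] using hsum
    exact ⟨fun _ _ ↦ 0, by simp, by simp, fun l ↦ by simp [hzero l]⟩
  push Not at hzero
  obtain ⟨l₀, hl₀⟩ := hzero
  have hle (c : ℕ) : ∑ l, ⌊x l * c⌋₊ ≤ c * q := by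
    have h : ∑ l, (⌊x l * c⌋₊ : ℝ) ≤ ∑ l, x l * c :=
      sum_le_sum fun l _ ↦ Nat.floor_le (mul_nonneg (hx l) c.cast_nonneg)
    rw [← sum_mul, hsum, mul_comm] at h
    exact_mod_cast h
  have hfloor (l : L) : Tendsto (fun c : ℕ ↦ (⌊x l * c⌋₊ : ℝ) / c) atTop (𝓝 (x l)) :=
    (tendsto_nat_floor_mul_div_atTop (hx l)).comp tendsto_natCast_atTop_atTop
  have hdefect : Tendsto (fun c : ℕ ↦ ((c * q - ∑ l, ⌊x l * c⌋₊ : ℕ) : ℝ) / c) atTop (𝓝 0) := by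
    have h := (tendsto_const_nhds (x := (q : ℝ))).sub (tendsto_finsetSum univ fun l _ ↦ hfloor l)
    rw [hsum, sub_self] at h
    refine h.congr' ?_
    filter_upwards [eventually_ne_atTop 0] with c hc
    rw [Nat.cast_sub (hle c), ← sum_div, Nat.cast_mul, Nat.cast_sum, sub_div,
      mul_div_cancel_left₀ _ (Nat.cast_ne_zero.2 hc)]
  -- All the mass lost by rounding down is put on the single index `l₀`, where `x` does not vanish.
  refine ⟨fun c l ↦ ⌊x l * c⌋₊ + if l = l₀ then c * q - ∑ i, ⌊x i * c⌋₊ else 0,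
    fun c ↦ ?_, fun c l h ↦ ?_, fun l ↦ ?_⟩
  · rw [sum_add_distrib, sum_ite_eq' univ l₀, if_pos (mem_univ l₀), Nat.add_sub_cancel' (hle c)]
  · have hne : l ≠ l₀ := fun e ↦ hl₀ (e ▸ h)
    simp [h, hne]
  · rcases eq_or_ne l l₀ with rfl | h
    · simpa [add_div] using (hfloor l).add hdefect
    · simpa [h] using hfloor l

/-! ### The summands of the normalizing constant -/

section Routings

variable {J L : Type*} [Fintype J] [Fintype L] {A : L → J → ℝ} {q : J → ℕ} {m : L → J → ℕ}

/-- The arrays `m` over which the sum `Φ(q)` extends: `m l j` of the `q j` jobs of queue `j` are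
assigned to pool `l`, and none when pool `l` does not serve queue `j`. They are realized as a
subset of a finite box. -/
noncomputable def routings (A : L → J → ℝ) (q : J → ℕ) : Finset (L → J → ℕ) :=
  {m ∈ Fintype.piFinset fun _ : L ↦ Fintype.piFinset fun j ↦ range (q j + 1) |
    (∀ l j, A l j = 0 → m l j = 0) ∧ ∀ j, ∑ l, m l j = q j}

theorem mem_routings :
    m ∈ routings A q ↔ (∀ l j, A l j = 0 → m l j = 0) ∧ ∀ j, ∑ l, m l j = q j := by
  simp only [routings, mem_filter, Fintype.mem_piFinset, mem_range, and_iff_right_iff_imp]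
  rintro ⟨-, hsum⟩ l j
  exact Nat.lt_succ_of_le (hsum j ▸ single_le_sum_of_canonicallyOrdered
    (f := fun l ↦ m l j) (mem_univ l))

theorem card_routings_le (A : L → J → ℝ) (q : J → ℕ) :
    #(routings A q) ≤ (∏ j, (q j + 1)) ^ Fintype.card L :=
  (card_filter_le _ _).trans_eq (by simp [Fintype.card_piFinset])

theorem Phi_eq_sum_routings (A : L → J → ℝ) (q : J → ℕ) :
    Phi A q = ∑ m ∈ routings A q, ∏ l, multinomialTerm (A l) (m l) := by
  rw [Phi, tsum_eq_sum (s := routings A q) fun m hm ↦ if_neg (mem_routings.not.1 hm)]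
  refine sum_congr rfl fun m hm ↦ ?_
  rw [if_pos (mem_routings.1 hm)]
  simp only [multinomialTerm, cast_multinomial_eq_div]

theorem prod_multinomialTerm_mul_prod_pow_le_one (hA : ∀ l j, 0 ≤ A l j) {s : J → ℝ}
    (hs : ∀ j, 0 ≤ s j) (hfeas : ∀ l, ∑ j, A l j * s j ≤ 1) (hm : m ∈ routings A q) :
    (∏ l, multinomialTerm (A l) (m l)) * ∏ j, s j ^ q j ≤ 1 := by
  have hnonneg (l : L) (j : J) : 0 ≤ A l j * s j := mul_nonneg (hA l j) (hs j)
  have hsplit : ∏ j, s j ^ q j = ∏ l, ∏ j, s j ^ m l j := by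
    rw [Finset.prod_comm]
    exact prod_congr rfl fun j _ ↦ by rw [prod_pow_eq_pow_sum, (mem_routings.1 hm).2 j]
  rw [hsplit, ← prod_mul_distrib]
  simp only [← multinomialTerm_mul]
  exact prod_le_one (fun l _ ↦ multinomialTerm_nonneg (hnonneg l) _)
    fun l _ ↦ multinomialTerm_le_one (hnonneg l) (hfeas l) _

theorem Phi_mul_prod_pow_le (hA : ∀ l j, 0 ≤ A l j) {s : J → ℝ} (hs : ∀ j, 0 ≤ s j)
    (hfeas : ∀ l, ∑ j, A l j * s j ≤ 1) (q : J → ℕ) :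
    Phi A q * ∏ j, s j ^ q j ≤ (∏ j, ((q j : ℝ) + 1)) ^ Fintype.card L := by
  calc Phi A q * ∏ j, s j ^ q j ≤ #(routings A q) := by
        rw [Phi_eq_sum_routings, sum_mul]
        simpa using sum_le_card_nsmul _ _ 1 fun m hm ↦
          prod_multinomialTerm_mul_prod_pow_le_one hA hs hfeas hm
    _ ≤ (∏ j, ((q j : ℝ) + 1)) ^ Fintype.card L := mod_cast card_routings_le A q

theorem prod_multinomialTerm_pos (hA : ∀ l j, 0 ≤ A l j) (hm : m ∈ routings A q) :
    0 < ∏ l, multinomialTerm (A l) (m l) :=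
  prod_pos fun l _ ↦ multinomialTerm_pos (hA l) ((mem_routings.1 hm).1 l)

theorem prod_multinomialTerm_le_Phi (hA : ∀ l j, 0 ≤ A l j) (hm : m ∈ routings A q) :
    ∏ l, multinomialTerm (A l) (m l) ≤ Phi A q := by
  have hnonneg (k : L → J → ℕ) : 0 ≤ ∏ l, multinomialTerm (A l) (k l) :=
    prod_nonneg fun l _ ↦ multinomialTerm_nonneg (hA l) (k l)
  rw [Phi_eq_sum_routings]
  exact single_le_sum (fun k _ ↦ hnonneg k) hm

theorem log_Phi_le (hA : ∀ l j, 0 ≤ A l j) (hPhi : 0 < Phi A q) {s : J → ℝ} (hs : ∀ j, 0 < s j)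
    (hfeas : ∀ l, ∑ j, A l j * s j ≤ 1) :
    log (Phi A q) ≤ Fintype.card L * ∑ j, log (q j + 1) - ∑ j, q j * log (s j) := by
  have hprod : 0 < ∏ j, s j ^ q j := prod_pos fun j _ ↦ pow_pos (hs j) _
  have hlog := log_le_log (mul_pos hPhi hprod) (Phi_mul_prod_pow_le hA (fun j ↦ (hs j).le) hfeas q)
  rw [log_mul hPhi.ne' hprod.ne', log_pow, log_prod fun j _ ↦ (pow_pos (hs j) _).ne',
    log_prod fun j _ ↦ by positivity] at hlog
  simp only [log_pow] at hlog
  exact le_sub_iff_add_le.2 hlog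

end Routings

/-! ### Exponential rates -/

section Rates

variable {J L : Type*} [Fintype J] [Fintype L] {A : L → J → ℝ} {Q : J → ℕ} {lam : L → ℝ}
  {s : J → ℝ}

theorem IsKKTPair.exists_routings_tendsto (h : IsKKTPair A (fun j ↦ (Q j : ℝ)) lam s)
    (hA : ∀ l j, 0 ≤ A l j) :
    ∃ m : ℕ → L → J → ℕ, (∀ c, m c ∈ routings A fun j ↦ c * Q j) ∧
      ∀ l j, Tendsto (fun c : ℕ ↦ (m c l j : ℝ) / c) atTop (𝓝 (lam l * A l j * s j)) := by
  have hcolumn (j : J) := exists_nat_sum_eq_tendsto_div (x := fun l ↦ lam l * A l j * s j)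
    (fun l ↦ mul_nonneg (mul_nonneg (h.multiplier_nonneg l) (hA l j)) (h.pos j).le)
    ((sum_mul _ _ _).symm.trans (h.stationary j))
  choose m hsum hzero hlim using hcolumn
  refine ⟨fun c l j ↦ m j c l, fun c ↦ mem_routings.2 ⟨fun l j hl ↦ ?_, fun j ↦ hsum j c⟩,
    fun l j ↦ hlim j l⟩
  exact hzero j c l (by rw [hl, mul_zero, zero_mul])

theorem IsKKTPair.sum_mul_log_div (h : IsKKTPair A w lam s) :
    ∑ l, ∑ j, lam l * A l j * s j * log (A l j * (∑ i, lam l * A l i * s i) / (lam l * A l j * s j))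
      = -∑ j, w j * log (s j) := by
  have hrow (l : L) : ∑ i, lam l * A l i * s i = lam l := by
    simpa only [mul_sum, mul_assoc] using h.slackness l
  have hterm (l : L) (j : J) :
      lam l * A l j * s j * log (A l j * lam l / (lam l * A l j * s j)) =
        -(lam l * A l j * s j * log (s j)) := by
    rcases eq_or_ne (lam l * A l j) 0 with h0 | h0
    · simp [h0]
    · rw [mul_comm (A l j), div_mul_cancel_left₀ h0, log_inv, mul_neg]
  simp only [hrow, hterm, sum_neg_distrib]
  rw [sum_comm]
  simp only [← sum_mul, h.stationary]

theorem IsKKTPair.tendsto_log_prod_multinomialTerm_div (h : IsKKTPair A w lam s)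
    {m : ℕ → L → J → ℕ} (hzero : ∀ c l j, A l j = 0 → m c l j = 0)
    (hm : ∀ l j, Tendsto (fun c : ℕ ↦ (m c l j : ℝ) / c) atTop (𝓝 (lam l * A l j * s j))) :
    Tendsto (fun c : ℕ ↦ log (∏ l, multinomialTerm (A l) (m c l)) / c) atTop
      (𝓝 (-∑ j, w j * log (s j))) := by
  rw [← h.sum_mul_log_div]
  refine (tendsto_finsetSum univ fun l _ ↦
    tendsto_log_multinomialTerm_div (fun c ↦ hzero c l) (hm l)).congr fun c ↦ ?_
  rw [log_prod fun l _ ↦ multinomialTerm_ne_zero (hzero c l), sum_div]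

theorem tendsto_mul_sum_log_sub_div (r : ℝ) (Q : J → ℕ) (s : J → ℝ) :
    Tendsto (fun c : ℕ ↦ (r * ∑ j, log ((c * Q j : ℕ) + 1) - ∑ j, (c * Q j : ℕ) * log (s j)) / c)
      atTop (𝓝 (-∑ j, Q j * log (s j))) := by
  have hratio (j : J) : Tendsto (fun c : ℕ ↦ ((c * Q j : ℕ) : ℝ) / c) atTop (𝓝 (Q j)) := by
    refine tendsto_const_nhds.congr' ?_
    filter_upwards [eventually_ne_atTop 0] with c hc
    rw [Nat.cast_mul, mul_div_cancel_left₀ _ (Nat.cast_ne_zero.2 hc)]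
  have hlim := ((tendsto_finsetSum univ fun j _ ↦ tendsto_log_add_one_div (hratio j)).const_mul
    r).sub (tendsto_finsetSum univ fun j _ ↦ (hratio j).mul_const (log (s j)))
  rw [sum_const_zero, mul_zero, zero_sub] at hlim
  refine hlim.congr fun c ↦ ?_
  simp only [sub_div, mul_div_assoc, sum_div, div_mul_eq_mul_div]

end Rates

/-- logarithmic asymptotics of the Store-Forward normalizing constant:
for every `Q ∈ ℕ^J` with `Q j ≥ 1` for all `j`,
`(1/c) log Φ(cQ) → − max { ∑_j Q j log (s j) : s ∈ P, s j > 0 ∀ j }` as `c → ∞`,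
where `P = {s : s ≥ 0, ∀ l, ∑_j A l j * s j ≤ 1}` (the maximum is written as an `sSup`,
and is attained since `P` is compact). -/
theorem log_asymptotics_storeForward_constant
    {J L : Type*} [Fintype J] [Nonempty J] [Fintype L] [Nonempty L]
    (A : L → J → ℝ) (hA : ∀ l j, 0 ≤ A l j)
    (hcol : ∀ j, ∃ l, 0 < A l j)
    (Q : J → ℕ) (hQ : ∀ j, 1 ≤ Q j) :
    Filter.Tendsto
      (fun c : ℕ => (1 / (c : ℝ)) * Real.log (Phi A (fun j => c * Q j)))
      Filter.atTop
      (nhds (- sSup ((fun s : J → ℝ => ∑ j, (Q j : ℝ) * Real.log (s j)) ''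
        {s : J → ℝ | (∀ j, 0 < s j) ∧ ∀ l, ∑ j, A l j * s j ≤ 1}))) := by
  obtain ⟨lam, s, h⟩ := exists_isKKTPair hA hcol fun j ↦ Nat.cast_pos.2 (hQ j)
  rw [(h.isGreatest fun j ↦ Nat.cast_nonneg (Q j)).csSup_eq]
  obtain ⟨m, hm, hlim⟩ := h.exists_routings_tendsto hA
  have hterm_le (c : ℕ) := prod_multinomialTerm_le_Phi hA (hm c)
  have hterm_pos (c : ℕ) := prod_multinomialTerm_pos hA (hm c)
  have hlower := h.tendsto_log_prod_multinomialTerm_div (fun c ↦ (mem_routings.1 (hm c)).1) hlim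
  have hupper := tendsto_mul_sum_log_sub_div (Fintype.card L) Q s
  simp only [one_div_mul_eq_div]
  refine tendsto_of_tendsto_of_tendsto_of_le_of_le hlower hupper (fun c ↦ ?_) (fun c ↦ ?_)
  · exact div_le_div_of_nonneg_right (log_le_log (hterm_pos c) (hterm_le c)) c.cast_nonneg
  · exact div_le_div_of_nonneg_right
      (log_Phi_le hA ((hterm_pos c).trans_le (hterm_le c)) h.pos h.feasible) c.cast_nonneg
end
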